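/- Let p, q ∈ [1,∞) and let μ, ν be Borel probability measures on ℝ^d with finite pq-th moments, M_{pq}(μ), M_{pq}(ν) < ∞. Then D_{p,q}(μ,ν) ≤ q^p · 2^{pq+p−1+1/q} · (M_{pq}(μ) + M_{pq}(ν))^{(q−1)/(pq)} · W_{pq}(μ,ν). -/

import Mathlib

/-!
For nonnegative `a, b` one has `|a ^ q - b ^ q| ≤ q * |a - b| * max a b ^ (q - 1)` (Bernoulli).
With `a = ‖x - x'‖`, `b = ‖y - y'‖` the triangle inequality gives `|a - b| ≤ ‖x - y‖ + ‖x' - y'‖`,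
so Hölder's inequality with the weights `1 / q` and `(q - 1) / q` on `π ⊗ π` bounds the
Gromov–Wasserstein cost of any coupling `π` by
`q ^ p * (2 ^ (pq) * ∫ ‖x - y‖ ^ (pq) ∂π) ^ (1 / q) * (2 ^ (pq) * M) ^ ((q - 1) / q)`, where `M` is the
sum of the two `pq`-th moments (`integral_cost_le`). Taking `p`-th roots and the infimum over `π`
yields the estimate with the constant `q * 2 ^ q`, which is at most
`q ^ p * 2 ^ (pq + p - 1 + 1 / q)`.
-/

open MeasureTheory
open scoped ENNReal NNReal BigOperators

noncomputable section

/-- The set of couplings of two measures. -/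
def Couplings {E F : Type*} [MeasurableSpace E] [MeasurableSpace F]
    (μ : Measure E) (ν : Measure F) : Set (Measure (E × F)) :=
  {π | IsProbabilityMeasure π ∧ π.map Prod.fst = μ ∧ π.map Prod.snd = ν}

/-- The `(p,q)`-Gromov–Wasserstein distance. -/
def Dpq {E F : Type*} [NormedAddCommGroup E] [NormedAddCommGroup F]
    [MeasurableSpace E] [MeasurableSpace F] (p q : ℝ) (μ : Measure E) (ν : Measure F) : ℝ :=
  (sInf {v | ∃ π ∈ Couplings μ ν,
      v = ∫ z, |‖z.1.1 - z.2.1‖ ^ q - ‖z.1.2 - z.2.2‖ ^ q| ^ p ∂(π.prod π)}) ^ (1 / p)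

/-- The `r`-Wasserstein distance. -/
def Wass {E : Type*} [NormedAddCommGroup E] [MeasurableSpace E]
    (r : ℝ) (μ ν : Measure E) : ℝ :=
  (sInf {v | ∃ π ∈ Couplings μ ν, v = ∫ z, ‖z.1 - z.2‖ ^ r ∂π}) ^ (1 / r)

/-- Convexity of `t ↦ t ^ r`. -/
lemma add_rpow_le_two_rpow_mul {r a b : ℝ} (hr : 1 ≤ r) (ha : 0 ≤ a) (hb : 0 ≤ b) :
    (a + b) ^ r ≤ 2 ^ (r - 1) * (a ^ r + b ^ r) := by
  lift a to ℝ≥0 using ha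
  lift b to ℝ≥0 using hb
  exact_mod_cast NNReal.rpow_add_le_mul_rpow_add_rpow a b hr

lemma rpow_sub_rpow_le {q a b : ℝ} (hq : 1 ≤ q) (hb : 0 ≤ b) (hab : b ≤ a) :
    a ^ q - b ^ q ≤ q * (a - b) * a ^ (q - 1) := by
  rcases (hb.trans hab).eq_or_lt with h0 | ha
  · have hb0 : b = 0 := le_antisymm (h0 ▸ hab) hb
    subst hb0
    simp [← h0]
  -- Bernoulli's inequality for `b / a = 1 + (b / a - 1)`, multiplied by `a ^ q`
  have h := one_add_mul_self_le_rpow_one_add (s := b / a - 1)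
    (by linarith [div_nonneg hb ha.le]) hq
  rw [add_sub_cancel, Real.div_rpow hb ha.le, le_div_iff₀ (Real.rpow_pos_of_pos ha q)] at h
  have h2 : a ^ q = a ^ (q - 1) * a := by
    rw [← Real.rpow_add_one ha.ne', sub_add_cancel]
  have h3 : (1 + q * (b / a - 1)) * a ^ q = a ^ q - q * (a - b) * a ^ (q - 1) := by
    rw [h2]
    field_simp
    ring
  linarith

lemma abs_rpow_sub_rpow_le {q a b : ℝ} (hq : 1 ≤ q) (ha : 0 ≤ a) (hb : 0 ≤ b) :
    |a ^ q - b ^ q| ≤ q * |a - b| * max a b ^ (q - 1) := by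
  rcases le_total b a with h | h
  · rw [abs_of_nonneg (sub_nonneg.2 h), max_eq_left h,
      abs_of_nonneg (sub_nonneg.2 (Real.rpow_le_rpow hb h (by linarith)))]
    exact rpow_sub_rpow_le hq hb h
  · rw [abs_sub_comm, abs_sub_comm a b, abs_of_nonneg (sub_nonneg.2 h), max_eq_right h,
      abs_of_nonneg (sub_nonneg.2 (Real.rpow_le_rpow ha h (by linarith)))]
    exact rpow_sub_rpow_le hq ha h

/-- The pointwise bound, in the shape `f ^ (1 / q) * g ^ ((q - 1) / q)` to which Hölder's inequality
applies. -/
lemma cost_pow_le {p q a b c G : ℝ} (hp : 1 ≤ p) (hq : 1 ≤ q) (ha : 0 ≤ a) (hb : 0 ≤ b)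
    (hc : |a - b| ≤ c) (hG : a ^ (p * q) ≤ G ∧ b ^ (p * q) ≤ G) :
    |a ^ q - b ^ q| ^ p ≤ q ^ p * ((c ^ (p * q)) ^ (1 / q) * G ^ ((q - 1) / q)) := by
  have hc0 : 0 ≤ c := (abs_nonneg _).trans hc
  have hm : 0 ≤ max a b := le_max_of_le_left ha
  have hq0 : 0 < q := by linarith
  have hmG : max a b ^ (p * q) ≤ G := by
    rcases max_choice a b with h | h <;> rw [h]
    exacts [hG.1, hG.2]
  have e1 : (c ^ (p * q)) ^ (1 / q) = c ^ p := by
    rw [← Real.rpow_mul hc0]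
    congr 1
    field_simp
  have e2 : (max a b ^ (p * q)) ^ ((q - 1) / q) = (max a b ^ (q - 1)) ^ p := by
    rw [← Real.rpow_mul hm, ← Real.rpow_mul hm]
    congr 1
    field_simp
  calc |a ^ q - b ^ q| ^ p ≤ (q * |a - b| * max a b ^ (q - 1)) ^ p :=
        Real.rpow_le_rpow (abs_nonneg _) (abs_rpow_sub_rpow_le hq ha hb) (by linarith)
    _ = q ^ p * (|a - b| ^ p * (max a b ^ (q - 1)) ^ p) := by
        rw [Real.mul_rpow (by positivity) (by positivity),
          Real.mul_rpow (by positivity) (by positivity), mul_assoc]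
    _ ≤ _ := by
        rw [e1, ← e2]
        have : 0 ≤ (q - 1) / q := div_nonneg (by linarith) hq0.le
        gcongr

/-- Hölder's inequality with weights `s + t = 1`; unlike the version with conjugate exponents it
includes the endpoint `t = 0`. -/
lemma integral_rpow_mul_rpow_le {α : Type*} [MeasurableSpace α] {m : Measure α} {f g : α → ℝ}
    (hf : Integrable f m) (hg : Integrable g m) (hf0 : ∀ z, 0 ≤ f z) (hg0 : ∀ z, 0 ≤ g z)
    {s t : ℝ} (hs : 0 ≤ s) (ht : 0 ≤ t) (hst : s + t = 1) :
    Integrable (fun z => f z ^ s * g z ^ t) m ∧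
      ∫ z, f z ^ s * g z ^ t ∂m ≤ (∫ z, f z ∂m) ^ s * (∫ z, g z ∂m) ^ t := by
  have h0 : ∀ z, 0 ≤ f z ^ s * g z ^ t := fun z =>
    mul_nonneg (Real.rpow_nonneg (hf0 z) s) (Real.rpow_nonneg (hg0 z) t)
  have hint : Integrable (fun z => f z ^ s * g z ^ t) m := by
    refine ((hf.const_mul s).add (hg.const_mul t)).mono' ?_ (.of_forall fun z => ?_)
    · exact ((hf.aemeasurable.pow_const s).mul (hg.aemeasurable.pow_const t)).aestronglyMeasurable
    · rw [Real.norm_of_nonneg (h0 z)]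
      exact Real.geom_mean_le_arith_mean2_weighted hs ht (hf0 z) (hg0 z) hst
  refine ⟨hint, ?_⟩
  have hfi : 0 ≤ ∫ z, f z ∂m := integral_nonneg hf0
  have hgi : 0 ≤ ∫ z, g z ∂m := integral_nonneg hg0
  rw [← ENNReal.ofReal_le_ofReal_iff (by positivity), ENNReal.ofReal_mul (by positivity),
    ← ENNReal.ofReal_rpow_of_nonneg hfi hs, ← ENNReal.ofReal_rpow_of_nonneg hgi ht,
    ofReal_integral_eq_lintegral_ofReal hint (.of_forall h0),
    ofReal_integral_eq_lintegral_ofReal hf (.of_forall hf0),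
    ofReal_integral_eq_lintegral_ofReal hg (.of_forall hg0)]
  refine le_trans (le_of_eq (lintegral_congr fun z => ?_)) (ENNReal.lintegral_mul_norm_pow_le
    hf.aemeasurable.ennreal_ofReal hg.aemeasurable.ennreal_ofReal hs ht hst)
  rw [ENNReal.ofReal_mul (Real.rpow_nonneg (hf0 z) s), ENNReal.ofReal_rpow_of_nonneg (hf0 z) hs,
    ENNReal.ofReal_rpow_of_nonneg (hg0 z) ht]

lemma integral_add_prod_self {α : Type*} [MeasurableSpace α] {π : Measure α}
    [IsProbabilityMeasure π] {F : α → ℝ} (hF : Integrable F π) :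
    Integrable (fun z : α × α => F z.1 + F z.2) (π.prod π) ∧
      ∫ z : α × α, (F z.1 + F z.2) ∂(π.prod π) = 2 * ∫ x, F x ∂π := by
  refine ⟨(hF.comp_fst π).add (hF.comp_snd π), ?_⟩
  rw [integral_add (hF.comp_fst π) (hF.comp_snd π), integral_fun_fst, integral_fun_snd]
  simp [two_mul]

lemma norm_sub_rpow_le {E : Type*} [NormedAddCommGroup E] {r : ℝ} (hr : 1 ≤ r) (x y : E) :
    ‖x - y‖ ^ r ≤ 2 ^ (r - 1) * (‖x‖ ^ r + ‖y‖ ^ r) :=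
  (Real.rpow_le_rpow (norm_nonneg _) (norm_sub_le x y) (by linarith)).trans
    (add_rpow_le_two_rpow_mul hr (norm_nonneg x) (norm_nonneg y))

/-- The Gromov–Wasserstein cost of a single coupling is controlled by its Wasserstein cost. -/
lemma integral_cost_le {d : ℕ} {p q : ℝ} (hp : 1 ≤ p) (hq : 1 ≤ q)
    {μ ν : Measure (EuclideanSpace ℝ (Fin d))}
    (hμ : Integrable (fun x => ‖x‖ ^ (p * q)) μ)
    (hν : Integrable (fun y => ‖y‖ ^ (p * q)) ν)
    {π : Measure (EuclideanSpace ℝ (Fin d) × EuclideanSpace ℝ (Fin d))}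
    (hπ : π ∈ Couplings μ ν) :
    ∫ z, |‖z.1.1 - z.2.1‖ ^ q - ‖z.1.2 - z.2.2‖ ^ q| ^ p ∂(π.prod π)
      ≤ q ^ p * ((2 ^ (p * q) * ∫ z, ‖z.1 - z.2‖ ^ (p * q) ∂π) ^ (1 / q) *
        (2 ^ (p * q) * ((∫ x, ‖x‖ ^ (p * q) ∂μ) + ∫ y, ‖y‖ ^ (p * q) ∂ν)) ^ ((q - 1) / q)) := by
  obtain ⟨hprob, h1, h2⟩ := hπ
  have hr : 1 ≤ p * q := one_le_mul_of_one_le_of_one_le hp hq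
  have hq0 : 0 < q := by linarith
  set r := p * q with hrdef
  have hx : Integrable (fun z => ‖z.1‖ ^ r) π := by
    rw [← h1] at hμ
    exact hμ.comp_measurable measurable_fst
  have hy : Integrable (fun z => ‖z.2‖ ^ r) π := by
    rw [← h2] at hν
    exact hν.comp_measurable measurable_snd
  have ex : ∫ x, ‖x‖ ^ r ∂μ = ∫ z, ‖z.1‖ ^ r ∂π := by
    rw [← h1] at hμ ⊢
    exact integral_map measurable_fst.aemeasurable hμ.1
  have ey : ∫ y, ‖y‖ ^ r ∂ν = ∫ z, ‖z.2‖ ^ r ∂π := by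
    rw [← h2] at hν ⊢
    exact integral_map measurable_snd.aemeasurable hν.1
  have hG : Integrable (fun z => 2 ^ (r - 1) * (‖z.1‖ ^ r + ‖z.2‖ ^ r)) π :=
    (hx.add hy).const_mul _
  have hxy : Integrable (fun z => ‖z.1 - z.2‖ ^ r) π := by
    refine hG.mono' (by fun_prop (disch := positivity)) (.of_forall fun z => ?_)
    rw [Real.norm_of_nonneg (by positivity)]
    exact norm_sub_rpow_le hr _ _
  have hF : Integrable (fun z => 2 ^ (r - 1) * ‖z.1 - z.2‖ ^ r) π := hxy.const_mul _
  have h2r : (2 : ℝ) * 2 ^ (r - 1) = 2 ^ r := by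
    rw [mul_comm, ← Real.rpow_add_one two_ne_zero, sub_add_cancel]
  obtain ⟨hFi, hFe⟩ := integral_add_prod_self hF
  obtain ⟨hGi, hGe⟩ := integral_add_prod_self hG
  rw [integral_const_mul, ← mul_assoc, h2r] at hFe
  rw [integral_const_mul, ← mul_assoc, h2r, integral_add hx hy] at hGe
  obtain ⟨hi, hle⟩ := integral_rpow_mul_rpow_le hFi hGi (fun z => by positivity)
    (fun z => by positivity) (s := 1 / q) (t := (q - 1) / q) (by positivity)
    (div_nonneg (by linarith) hq0.le) (by field_simp; ring)
  rw [hFe, hGe] at hle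
  rw [ex, ey]
  refine le_trans (integral_mono_of_nonneg (.of_forall fun z => by positivity)
    (hi.const_mul (q ^ p)) (.of_forall fun z => ?_)) ?_
  · obtain ⟨⟨x, y⟩, ⟨x', y'⟩⟩ := z
    have hc : |‖x - x'‖ - ‖y - y'‖| ≤ ‖x - y‖ + ‖x' - y'‖ := by
      refine (abs_norm_sub_norm_le _ _).trans ?_
      rw [sub_sub_sub_comm]
      exact norm_sub_le _ _
    refine (cost_pow_le hp hq (norm_nonneg _) (norm_nonneg _) hc
      (G := 2 ^ (r - 1) * (‖x‖ ^ r + ‖y‖ ^ r) + 2 ^ (r - 1) * (‖x'‖ ^ r + ‖y'‖ ^ r))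
      ⟨?_, ?_⟩).trans ?_
    · refine (norm_sub_rpow_le hr x x').trans ?_
      rw [← mul_add]
      gcongr <;> linarith [Real.rpow_nonneg (norm_nonneg y) r, Real.rpow_nonneg (norm_nonneg y') r]
    · refine (norm_sub_rpow_le hr y y').trans ?_
      rw [← mul_add]
      gcongr <;> linarith [Real.rpow_nonneg (norm_nonneg x) r, Real.rpow_nonneg (norm_nonneg x') r]
    · dsimp only
      rw [← mul_add (2 ^ (r - 1)) (‖x - y‖ ^ r)]
      gcongr
      exact add_rpow_le_two_rpow_mul hr (norm_nonneg _) (norm_nonneg _)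
  · rw [integral_const_mul]
    gcongr

/-- **The `(p,q)`-GW distance is dominated by the `pq`-Wasserstein distance:**
`D_{p,q}(μ,ν) ≤ q^p · 2^{pq+p−1+1/q} · (M_{pq}(μ)+M_{pq}(ν))^{(q−1)/(pq)} · W_{pq}(μ,ν)`. -/
theorem gw_le_wasserstein (d : ℕ) (p q : ℝ) (hp : 1 ≤ p) (hq : 1 ≤ q)
    (μ ν : Measure (EuclideanSpace ℝ (Fin d)))
    [IsProbabilityMeasure μ] [IsProbabilityMeasure ν]
    (hμ : Integrable (fun x => ‖x‖ ^ (p * q)) μ)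
    (hν : Integrable (fun y => ‖y‖ ^ (p * q)) ν) :
    Dpq p q μ ν
      ≤ q ^ p * 2 ^ (p * q + p - 1 + 1 / q)
          * ((∫ x, ‖x‖ ^ (p * q) ∂μ) + ∫ y, ‖y‖ ^ (p * q) ∂ν) ^ ((q - 1) / (p * q))
          * Wass (p * q) μ ν := by
  have hr : 1 ≤ p * q := one_le_mul_of_one_le_of_one_le hp hq
  have hp0 : 0 < p := by linarith
  have hq0 : 0 < q := by linarith
  have hr0 : 0 < p * q := by linarith
  set M := (∫ x, ‖x‖ ^ (p * q) ∂μ) + ∫ y, ‖y‖ ^ (p * q) ∂ν with hM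
  have hM0 : 0 ≤ M := by positivity
  set K := q * 2 ^ q * M ^ ((q - 1) / (p * q)) with hK
  have hK0 : 0 ≤ K := by positivity
  set S := {v | ∃ π ∈ Couplings μ ν, v = ∫ z, ‖z.1 - z.2‖ ^ (p * q) ∂π} with hS
  have hSne : S.Nonempty :=
    ⟨_, μ.prod ν, ⟨inferInstance, by simp, by simp⟩, rfl⟩
  have hS0 : ∀ v ∈ S, 0 ≤ v := by
    rintro v ⟨π, -, rfl⟩
    positivity
  have hWass : Wass (p * q) μ ν = sInf S ^ (1 / (p * q)) := rfl
  have hW0 : 0 ≤ Wass (p * q) μ ν := by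
    rw [hWass]
    exact Real.rpow_nonneg (Real.sInf_nonneg hS0) _
  have hD0 : 0 ≤ Dpq p q μ ν := by
    refine Real.rpow_nonneg (Real.sInf_nonneg ?_) _
    rintro v ⟨π, -, rfl⟩
    positivity
  have key : ∀ w ∈ S, Dpq p q μ ν ≤ K * w ^ (1 / (p * q)) := by
    rintro w ⟨π, hπ, rfl⟩
    have hw0 : 0 ≤ ∫ z, ‖z.1 - z.2‖ ^ (p * q) ∂π := by positivity
    have hbdd : BddBelow {v | ∃ π ∈ Couplings μ ν,
        v = ∫ z, |‖z.1.1 - z.2.1‖ ^ q - ‖z.1.2 - z.2.2‖ ^ q| ^ p ∂(π.prod π)} := by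
      refine ⟨0, ?_⟩
      rintro v ⟨π, -, rfl⟩
      positivity
    have h := (csInf_le hbdd ⟨π, hπ, rfl⟩).trans (integral_cost_le hp hq hμ hν hπ)
    rw [← hM] at h
    generalize (∫ z, ‖z.1 - z.2‖ ^ (p * q) ∂π) = w at *
    refine (Real.rpow_le_rpow (Real.sInf_nonneg ?_) h (by positivity)).trans (le_of_eq ?_)
    · rintro v ⟨π, -, rfl⟩
      positivity
    have h2 : (0 : ℝ) ≤ 2 ^ (p * q) := by positivity
    rw [Real.mul_rpow (by positivity) (by positivity),
      Real.mul_rpow (by positivity) (by positivity), Real.mul_rpow h2 hw0, Real.mul_rpow h2 hM0,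
      Real.mul_rpow (by positivity) (by positivity), Real.mul_rpow (by positivity) (by positivity)]
    simp only [← Real.rpow_mul hq0.le, ← Real.rpow_mul hw0, ← Real.rpow_mul hM0,
      ← Real.rpow_mul (zero_le_two : (0 : ℝ) ≤ 2)]
    have e1 : p * (1 / p) = 1 := by field_simp
    have e2 : p * q * (1 / q) * (1 / p) = 1 := by field_simp
    have e3 : p * q * ((q - 1) / q) * (1 / p) = q - 1 := by field_simp
    have e4 : 1 / q * (1 / p) = 1 / (p * q) := by field_simp
    have e5 : (q - 1) / q * (1 / p) = (q - 1) / (p * q) := by field_simp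
    have e6 : (2 : ℝ) ^ q = 2 * 2 ^ (q - 1) := by
      rw [mul_comm, ← Real.rpow_add_one two_ne_zero, sub_add_cancel]
    rw [e1, e2, e3, e4, e5, hK, e6, Real.rpow_one, Real.rpow_one]
    ring
  have main : Dpq p q μ ν ≤ K * Wass (p * q) μ ν := by
    rcases hK0.eq_or_lt with h0 | hKpos
    · obtain ⟨w, hw⟩ := hSne
      have := key w hw
      rw [← h0, zero_mul] at this ⊢
      exact this
    -- `w ≥ (D / K) ^ (p * q)` for every admissible cost `w`, hence for the infimum
    have hle : (Dpq p q μ ν / K) ^ (p * q) ≤ sInf S := by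
      refine le_csInf hSne fun w hw => ?_
      have h : Dpq p q μ ν / K ≤ w ^ (1 / (p * q)) := by
        rw [div_le_iff₀' hKpos]
        exact key w hw
      refine (Real.rpow_le_rpow (by positivity) h hr0.le).trans (le_of_eq ?_)
      rw [one_div, Real.rpow_inv_rpow (hS0 w hw) hr0.ne']
    rw [← div_le_iff₀' hKpos, hWass]
    refine le_trans (le_of_eq ?_) (Real.rpow_le_rpow (by positivity) hle (by positivity))
    rw [one_div, Real.rpow_rpow_inv (by positivity) hr0.ne']
  refine main.trans ?_
  have hqp : q ≤ q ^ p := Real.self_le_rpow_of_one_le hq hp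
  have hexp : q ≤ p * q + p - 1 + 1 / q := by
    have : 0 < 1 / q := by positivity
    nlinarith
  have h2 : (2 : ℝ) ^ q ≤ 2 ^ (p * q + p - 1 + 1 / q) :=
    Real.rpow_le_rpow_of_exponent_le one_le_two hexp
  rw [hK]
  gcongr
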